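/- arXiv:1106.5700 — 2 statements merged into one kernel-verified Lean document; each statement's English description precedes it below -/
import Mathlib

section
/- Let A be a stuttering-invariant TGBA and T a Kripke structure over the same set AP of atomic propositions. If the Symbolic Observation Product A▷T has an accepting run, then the stuttering synchronized product A⊗̃T has an accepting run. -/
open scoped Classical

/-- Boolean formulas over atomic propositions of type `α`. -/
inductive BForm (α : Type) : Type
  | tru : BForm α
  | fls : BForm α
  | var : α → BForm α
  | band : BForm α → BForm α → BForm α
  | bor : BForm α → BForm α → BForm α
  | bnot : BForm α → BForm α

namespace BForm

variable {α : Type}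

/-- Evaluation of a Boolean formula under an assignment. -/
def eval : BForm α → (α → Bool) → Bool
  | tru, _ => true
  | fls, _ => false
  | var a, ρ => ρ a
  | band f g, ρ => f.eval ρ && g.eval ρ
  | bor f g, ρ => f.eval ρ || g.eval ρ
  | bnot f, ρ => !(f.eval ρ)

/-- Free variables (occurring atomic propositions) of a Boolean formula. -/
def FV : BForm α → Set α
  | tru => ∅
  | fls => ∅
  | var a => {a}
  | band f g => f.FV ∪ g.FV
  | bor f g => f.FV ∪ g.FV
  | bnot f => f.FV

/-- Satisfiability of a Boolean formula. -/
def Sat (f : BForm α) : Prop := ∃ ρ : α → Bool, f.eval ρ = true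

/-- The literal describing the value of the assignment `ρ` on the proposition `a`. -/
def lit (ρ : α → Bool) (a : α) : BForm α := if ρ a then var a else bnot (var a)

end BForm

/-- The formula (a conjunction of literals) encoding the restriction of the
assignment `ρ` to the finite set `AP`: the interpretation of an assignment
as a Boolean formula. -/
noncomputable def assignForm {α : Type} (AP : Finset α) (ρ : α → Bool) : BForm α :=
  (AP.toList.map (BForm.lit ρ)).foldr BForm.band BForm.tru

/-- `ρ ≡_E ρ'`: the two assignments agree on all propositions of `E`. -/
def AgreeOn {α : Type} (E : Set α) (ρ ρ' : α → Bool) : Prop := ∀ a ∈ E, ρ a = ρ' a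

/-- Restriction of an assignment to the set `E` (`false` outside of `E`). -/
noncomputable def restrS {α : Type} (E : Set α) (ρ : α → Bool) : α → Bool :=
  fun p => if p ∈ E then ρ p else false

/-- A Transition-based Generalized Büchi Automaton over atomic propositions
drawn from `α`, with alphabet `AP`, state set `Q`, acceptance conditions `F`,
transition relation `δ ⊆ Q × B(AP) × 2^F × Q` and initial state `init`. -/
structure TGBA (α : Type) where
  AP : Finset α
  Q : Type
  F : Type
  init : Q
  δ : Set (Q × BForm α × Set F × Q)

/-- A Kripke structure over atomic propositions drawn from `α`, with alphabet
`AP`, states `S` labeled by assignments via `lab`, transition relation `Δ`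
and initial state `init`. -/
structure Kripke (α : Type) where
  AP : Finset α
  S : Type
  lab : S → α → Bool
  Δ : Set (S × S)
  init : S

namespace TGBA

variable {α : Type}

/-- Well-formedness: every transition label is a satisfiable formula over `AP`. -/
def WF (A : TGBA α) : Prop := ∀ t ∈ A.δ, (t.2.1).FV ⊆ ↑A.AP ∧ (t.2.1).Sat

/-- A run: an infinite sequence of consecutive transitions starting at the
initial state. -/
def IsRun (A : TGBA α) (π : ℕ → A.Q × BForm α × Set A.F × A.Q) : Prop :=
  (π 0).1 = A.init ∧ ∀ i, π i ∈ A.δ ∧ (π i).2.2.2 = (π (i + 1)).1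

/-- An accepting run: a run visiting every acceptance condition infinitely often. -/
def IsAccRun (A : TGBA α) (π : ℕ → A.Q × BForm α × Set A.F × A.Q) : Prop :=
  A.IsRun π ∧ ∀ c : A.F, ∀ i : ℕ, ∃ j, i ≤ j ∧ c ∈ (π j).2.2.1

/-- `Acc(A) ≠ ∅`: the automaton has an accepting run. -/
def HasAccRun (A : TGBA α) : Prop := ∃ π, A.IsAccRun π

/-- The language of the TGBA: the infinite words compatible with some accepting run. -/
def Lang (A : TGBA α) : Set (ℕ → α → Bool) :=
  {w | ∃ π, A.IsAccRun π ∧ ∀ i, ((π i).2.1).eval (w i) = true}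

/-- One-step successor relation between automaton states. -/
def Step (A : TGBA α) (q q' : A.Q) : Prop := ∃ f ac, (q, f, ac, q') ∈ A.δ

/-- Reachability between automaton states. -/
def Reach (A : TGBA α) : A.Q → A.Q → Prop := Relation.ReflTransGen A.Step

/-- `FV(q)`: the union of the free variables of the labels of all transitions
reachable from `q`. -/
def FVq (A : TGBA α) (q : A.Q) : Set α :=
  {p | ∃ t ∈ A.δ, A.Reach q t.1 ∧ p ∈ (t.2.1).FV}

/-- There is some transition between the two states. -/
def HasTrans (A : TGBA α) (p₁ p₂ : A.Q) : Prop := ∃ f ac, (p₁, f, ac, p₂) ∈ A.δ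

/-- There is a transition with acceptance set `ac` between the two states. -/
def HasTransAc (A : TGBA α) (p₁ : A.Q) (ac : Set A.F) (p₂ : A.Q) : Prop :=
  ∃ f, (p₁, f, ac, p₂) ∈ A.δ

end TGBA

/-- Prepend a finite word to an infinite word. -/
def appendω {β : Type} (u : List β) (v : ℕ → β) : ℕ → β := fun n =>
  if h : n < u.length then u.get ⟨n, h⟩ else v (n - u.length)

/-- A language of infinite words is stuttering-invariant. -/
def StutterInvariantLang {β : Type} (L : Set (ℕ → β)) : Prop :=
  ∀ (u : List β) (ρ : β) (v : ℕ → β), appendω (u ++ [ρ]) v ∈ L ↔ appendω (u ++ [ρ, ρ]) v ∈ L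

/-- A TGBA is stuttering-invariant iff its language is. -/
def TGBA.StutterInvariant {α : Type} (A : TGBA α) : Prop := StutterInvariantLang A.Lang

/-- Two infinite words are stuttering equivalent: they are equal after collapsing
consecutive repeated letters, as witnessed by matching block decompositions. -/
def StutterEquiv {β : Type} (w w' : ℕ → β) : Prop :=
  ∃ ι κ : ℕ → ℕ, ι 0 = 0 ∧ κ 0 = 0 ∧ StrictMono ι ∧ StrictMono κ ∧
    ∀ k i j, ι k ≤ i → i < ι (k + 1) → κ k ≤ j → j < κ (k + 1) → w i = w' j

/-- Two languages are stuttering equivalent: every word of either language is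
stuttering equivalent to some word of the other. -/
def LangStutterEquiv {β : Type} (L L' : Set (ℕ → β)) : Prop :=
  (∀ w ∈ L, ∃ w' ∈ L', StutterEquiv w w') ∧ ∀ w' ∈ L', ∃ w ∈ L, StutterEquiv w w'

namespace Kripke

variable {α : Type}

/-- `SuccF(a, P)`: successors of states of `a`, filtered to keep only those
whose label satisfies `P`. -/
def SuccF (T : Kripke α) (a : Set T.S) (P : (α → Bool) → Prop) : Set T.S :=
  {s' | ∃ s ∈ a, (s, s') ∈ T.Δ ∧ P (T.lab s')}

/-- `ReachF(a, P)`: the least superset of `a` closed under `SuccF(·, P)`. -/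
def ReachF (T : Kripke α) (a : Set T.S) (P : (α → Bool) → Prop) : Set T.S :=
  ⋂₀ {b | a ⊆ b ∧ T.SuccF b P ⊆ b}

/-- `FSucc(a, P)`: successors of the states of `a` whose label satisfies `P`. -/
def FSucc (T : Kripke α) (a : Set T.S) (P : (α → Bool) → Prop) : Set T.S :=
  {s' | ∃ s ∈ a, (s, s') ∈ T.Δ ∧ P (T.lab s)}

/-- `FReach(a, P)`: the least superset of `a` closed under `FSucc(·, P)`. -/
def FReach (T : Kripke α) (a : Set T.S) (P : (α → Bool) → Prop) : Set T.S :=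
  ⋂₀ {b | a ⊆ b ∧ T.FSucc b P ⊆ b}

/-- The label of (a representative state of) an aggregate. -/
noncomputable def aggLab (T : Kripke α) (a : Set T.S) : α → Bool :=
  if h : a.Nonempty then T.lab h.some else fun _ => false

/-- Homogeneity of a set of states w.r.t. the observed propositions `E`. -/
def Homog (T : Kripke α) (E : Set α) (a : Set T.S) : Prop :=
  ∀ s ∈ a, ∀ s' ∈ a, AgreeOn E (T.lab s) (T.lab s')

/-- `a` is a (nonempty, homogeneous, saturated) aggregate w.r.t. `E`. -/
def IsAgg (T : Kripke α) (E : Set α) (a : Set T.S) : Prop :=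
  a.Nonempty ∧ T.Homog E a ∧ a = T.ReachF a fun ρ => AgreeOn E ρ (T.aggLab a)

/-- `a` contains a cycle of `Δ`. -/
def HasCycle (T : Kripke α) (a : Set T.S) : Prop :=
  ∃ s ∈ a, Relation.TransGen (fun x y => x ∈ a ∧ y ∈ a ∧ (x, y) ∈ T.Δ) s s

end Kripke

/-- Transition relation of the synchronized product `A ⊗ T`. -/
def synchδ {α : Type} (A : TGBA α) (T : Kripke α) :
    Set ((A.Q × T.S) × BForm α × Set A.F × (A.Q × T.S)) :=
  {t | ∃ (q₁ q₂ : A.Q) (s₁ s₂ : T.S) (ac : Set A.F),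
    t = ((q₁, s₁), assignForm T.AP (T.lab s₁), ac, (q₂, s₂)) ∧ (s₁, s₂) ∈ T.Δ ∧
    ∃ g : BForm α, (q₁, g, ac, q₂) ∈ A.δ ∧ g.eval (T.lab s₁) = true}

/-- The synchronized product `A ⊗ T` of a TGBA and a Kripke structure. -/
def synchProd {α : Type} (A : TGBA α) (T : Kripke α) : TGBA α where
  AP := T.AP
  Q := A.Q × T.S
  F := A.F
  init := (A.init, T.init)
  δ := synchδ A T

/-- The stuttering synchronized product `A ⊗̃ T`: the synchronized product
together with the extra stuttering transitions. -/
def stutProd {α : Type} (A : TGBA α) (T : Kripke α) : TGBA α where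
  AP := T.AP
  Q := A.Q × T.S
  F := A.F
  init := (A.init, T.init)
  δ := synchδ A T ∪
    {t | ∃ q₁ s₁ s₂,
      t = ((q₁, s₁), assignForm T.AP (T.lab s₁), (∅ : Set A.F), (q₁, s₂)) ∧
      (s₁, s₂) ∈ T.Δ ∧ AgreeOn (A.FVq q₁) (T.lab s₁) (T.lab s₂)}

/-- The Symbolic Observation Graph of `T` over the observed propositions `E`:
a Kripke structure whose states are aggregates (`Sum.inl`) and divergent
states (`Sum.inr`, assignments over `E`). -/
noncomputable def SOG {α : Type} (T : Kripke α) (E : Finset α) : Kripke α where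
  AP := E
  S := Set T.S ⊕ ({x // x ∈ E} → Bool)
  lab := fun x =>
    match x with
    | Sum.inl a => restrS ↑E (T.aggLab a)
    | Sum.inr l => fun p => if h : p ∈ E then l ⟨p, h⟩ else false
  Δ := {pr |
    (∃ a a' : Set T.S, pr = (Sum.inl a, Sum.inl a') ∧ T.IsAgg ↑E a ∧ T.IsAgg ↑E a' ∧
      a' = T.ReachF (T.SuccF a (fun ρ => AgreeOn ↑E ρ (T.aggLab a')) \ a)
          fun ρ => AgreeOn ↑E ρ (T.aggLab a')) ∨
    (∃ (a : Set T.S) (l : {x // x ∈ E} → Bool), pr = (Sum.inl a, Sum.inr l) ∧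
      T.IsAgg ↑E a ∧ T.HasCycle a ∧ ∀ p : {x // x ∈ E}, l p = T.aggLab a ↑p) ∨
    ∃ l : {x // x ∈ E} → Bool, pr = (Sum.inr l, Sum.inr l)}
  init := Sum.inl (T.ReachF {T.init} fun ρ => AgreeOn ↑E ρ (T.lab T.init))

/-- The finite set of propositions of `AP` observable from `q`. -/
noncomputable def fvFinset {α : Type} (A : TGBA α) (q : A.Q) : Finset α :=
  A.AP.filter fun p => p ∈ A.FVq q

/-- The Symbolic Observation Product `A ▷ T`: a TGBA whose states pair a state of
`A` with either an aggregate (`Sum.inl`) or a divergent state (`Sum.inr`, an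
assignment over `FV(q)`, canonically `false` outside `FV(q)`). -/
noncomputable def SOP {α : Type} (A : TGBA α) (T : Kripke α) : TGBA α where
  AP := A.AP
  Q := A.Q × (Set T.S ⊕ (α → Bool))
  F := A.F
  init := (A.init,
    Sum.inl (T.ReachF {T.init} fun ρ => AgreeOn (A.FVq A.init) ρ (T.lab T.init)))
  δ := {t |
    -- aggregate to aggregate
    (∃ (q₁ q₂ : A.Q) (a₁ a₂ : Set T.S) (ac : Set A.F),
      t = ((q₁, Sum.inl a₁), assignForm (fvFinset A q₁) (T.aggLab a₁), ac,
           (q₂, Sum.inl a₂)) ∧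
      T.IsAgg (A.FVq q₁) a₁ ∧ T.IsAgg (A.FVq q₂) a₂ ∧
      (∃ f : BForm α, (q₁, f, ac, q₂) ∈ A.δ ∧
        f.eval (restrS (A.FVq q₁) (T.aggLab a₁)) = true) ∧
      ∃ l' : α → Bool,
        a₂ = T.ReachF (T.SuccF a₁ (fun ρ => AgreeOn (A.FVq q₂) ρ l') \ a₁)
            fun ρ => AgreeOn (A.FVq q₂) ρ l') ∨
    -- aggregate to divergent
    (∃ (q₁ q₂ : A.Q) (a : Set T.S) (l₂ : α → Bool) (ac : Set A.F),
      t = ((q₁, Sum.inl a), assignForm (fvFinset A q₁) (T.aggLab a), ac,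
           (q₂, Sum.inr l₂)) ∧
      T.IsAgg (A.FVq q₁) a ∧ T.HasCycle a ∧
      l₂ = restrS (A.FVq q₂) (T.aggLab a) ∧
      ∃ f : BForm α, (q₁, f, ac, q₂) ∈ A.δ ∧
        f.eval (restrS (A.FVq q₁) (T.aggLab a)) = true) ∨
    -- divergent to divergent
    ∃ (q₁ q₂ : A.Q) (l₁ l₂ : α → Bool) (ac : Set A.F),
      t = ((q₁, Sum.inr l₁), assignForm (fvFinset A q₁) l₁, ac, (q₂, Sum.inr l₂)) ∧
      l₁ = restrS (A.FVq q₁) l₁ ∧ l₂ = restrS (A.FVq q₂) l₁ ∧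
      ∃ f : BForm α, (q₁, f, ac, q₂) ∈ A.δ ∧ f.eval l₁ = true}

/-- `SF(q, ac)` as a predicate on assignments: `ρ` satisfies the disjunction of
the labels of the self-loops on `q` whose acceptance sets are included in `ac`. -/
def SFpred {α : Type} (A : TGBA α) (q : A.Q) (ac : Set A.F) : (α → Bool) → Prop :=
  fun ρ => ∃ (f : BForm α) (ac' : Set A.F), (q, f, ac', q) ∈ A.δ ∧ ac' ⊆ ac ∧ f.eval ρ = true

/-- The Self-Loop Aggregation Product `A ⊠ T`. -/
def SLAP {α : Type} (A : TGBA α) (T : Kripke α) : TGBA α where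
  AP := ∅
  Q := A.Q × Set T.S
  F := A.F
  init := (A.init, T.FReach {T.init} (SFpred A A.init ∅))
  δ := {t | ∃ (q₁ q₂ : A.Q) (a₁ a₂ : Set T.S) (ac : Set A.F),
    t = ((q₁, a₁), BForm.tru, ac, (q₂, a₂)) ∧ a₁.Nonempty ∧ a₂.Nonempty ∧
    ∃ f : BForm α, (q₁, f, ac, q₂) ∈ A.δ ∧ (q₁ = q₂ → ac ≠ ∅) ∧
      a₂ = T.FReach (T.FSucc a₁ fun ρ => f.eval ρ = true) (SFpred A q₂ ac)}

/-!
An accepting run of `A ▷ T` is unfolded into an infinite layered graph whose `i`-th layer consists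
of the concrete states through which the `i`-th aggregate is entered. Inside an aggregate the run
of `A ⊗̃ T` moves by stuttering steps, which carry no acceptance condition, and each transition of
`A ▷ T` is fired from the state where the aggregate is left. Every state of a layer has a
predecessor in the previous layer, but possibly no successor in the next one, so an infinite path
comes from Kőnig's lemma. A divergent tail of the run keeps one layer forever, the cycles of the
last aggregate: since `FV` decreases along the run, their states satisfy all labels still to be
read.
-/

section Sequences

universe u

theorem exists_seq_of_forall_exists_succ {X : ℕ → Type*} {r : ∀ i, X i → X (i + 1) → Prop}
    (x₀ : X 0) (h : ∀ i x, ∃ y, r i x y) :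
    ∃ x : ∀ i, X i, x 0 = x₀ ∧ ∀ i, r i (x i) (x (i + 1)) := by
  choose next hnext using h
  exact ⟨Nat.rec x₀ next, rfl, fun i => hnext i _⟩

open CategoryTheory Opposite in
theorem exists_seq_of_forall_exists_pred {X : ℕ → Type u} [∀ i, Finite (X i)]
    [∀ i, Nonempty (X i)] {r : ∀ i, X i → X (i + 1) → Prop} (h : ∀ i y, ∃ x, r i x y) :
    ∃ x : ∀ i, X i, ∀ i, r i (x i) (x (i + 1)) := by
  choose pred hpred using h
  let F : ℕᵒᵖ ⥤ Type u := Functor.ofOpSequence fun i => ↾(pred i)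
  have (j : ℕᵒᵖ) : Finite (F.obj j) := inferInstanceAs (Finite (X j.unop))
  have (j : ℕᵒᵖ) : Nonempty (F.obj j) := inferInstanceAs (Nonempty (X j.unop))
  obtain ⟨σ, hσ⟩ := nonempty_sections_of_finite_inverse_system F
  let x (i : ℕ) : X i := σ (op i)
  have pred_x (i : ℕ) : pred i (x (i + 1)) = x i := by
    have := hσ (homOfLE i.le_succ).op
    rwa [Functor.ofOpSequence_map_homOfLE_succ] at this
  exact ⟨x, fun i => pred_x i ▸ hpred i (x (i + 1))⟩

variable {X : Type*} {r : X → X → Prop}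

theorem exists_path_extension_of_transGen {f : ℕ → X} {L : ℕ}
    (hf : ∀ n < L, r (f n) (f (n + 1))) {z : X} (h : Relation.TransGen r (f L) z) :
    ∃ (g : ℕ → X) (M : ℕ), (∀ n < M, r (g n) (g (n + 1))) ∧ g M = z ∧ L < M ∧
      ∀ n ≤ L, g n = f n := by
  induction h with
  | @single z hz =>
    refine ⟨Function.update f (L + 1) z, L + 1, ?_, ?_, ?_, ?_⟩ <;> grind
  | @tail y z _ hz ih =>
    obtain ⟨g, M, hg, rfl, hLM, hgf⟩ := ih
    refine ⟨Function.update g (M + 1) z, M + 1, ?_, ?_, ?_, ?_⟩ <;> grind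

theorem exists_seq_of_forall_transGen {x : ℕ → X}
    (h : ∀ i, Relation.TransGen r (x i) (x (i + 1))) :
    ∃ (y : ℕ → X) (φ : ℕ → ℕ), StrictMono φ ∧ φ 0 = 0 ∧ (∀ n, r (y n) (y (n + 1))) ∧
      ∀ i, y (φ i) = x i := by
  let Path (i : ℕ) := {p : (ℕ → X) × ℕ // p.1 p.2 = x i ∧ ∀ n < p.2, r (p.1 n) (p.1 (n + 1))}
  have extend (i : ℕ) (p : Path i) :
      ∃ p' : Path (i + 1), p.1.2 < p'.1.2 ∧ ∀ n ≤ p.1.2, p'.1.1 n = p.1.1 n := by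
    obtain ⟨⟨f, L⟩, hfL, hf⟩ := p
    obtain ⟨g, M, hg, hgM, hLM, hgf⟩ := exists_path_extension_of_transGen hf (hfL ▸ h i)
    exact ⟨⟨⟨g, M⟩, hgM, hg⟩, hLM, hgf⟩
  obtain ⟨p, hp₀, hp⟩ := exists_seq_of_forall_exists_succ ⟨(fun _ => x 0, 0), rfl, by simp⟩ extend
  let φ (i : ℕ) := (p i).1.2
  have φ_strictMono : StrictMono φ := strictMono_nat_of_lt_succ fun i => (hp i).1
  let y (n : ℕ) := (p n).1.1 n
  have coherent {i j n : ℕ} (hij : i ≤ j) (hn : n ≤ φ i) : (p j).1.1 n = (p i).1.1 n := by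
    induction j, hij using Nat.le_induction with
    | base => rfl
    | succ j hij ih => exact ((hp j).2 n (hn.trans (φ_strictMono.monotone hij))).trans ih
  have path_eq_y {i n : ℕ} (hn : n ≤ φ i) : (p i).1.1 n = y n := by
    rcases le_total i n with h | h
    · exact (coherent h hn).symm
    · exact coherent h φ_strictMono.le_apply
  refine ⟨y, φ, φ_strictMono, congrArg (fun p : Path 0 => p.1.2) hp₀, fun n => ?_, fun i => ?_⟩
  · have hn : n + 1 ≤ φ (n + 1) := φ_strictMono.le_apply
    rw [← path_eq_y hn, ← path_eq_y (Nat.le_of_succ_le hn)]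
    exact (p (n + 1)).2.2 n hn
  · exact (path_eq_y le_rfl).symm.trans (p i).2.1

end Sequences

section Formulas

variable {α : Type} {E E' : Set α} {ρ ρ' ρ'' : α → Bool}

theorem AgreeOn.trans (h : AgreeOn E ρ ρ') (h' : AgreeOn E ρ' ρ'') : AgreeOn E ρ ρ'' :=
  fun a ha => (h a ha).trans (h' a ha)

theorem AgreeOn.mono (hE : E ⊆ E') (h : AgreeOn E' ρ ρ') : AgreeOn E ρ ρ' :=
  fun a ha => h a (hE ha)

theorem agreeOn_restrS (E : Set α) (ρ : α → Bool) : AgreeOn E (restrS E ρ) ρ :=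
  fun _ ha => if_pos ha

theorem BForm.eval_eq_of_agreeOn {f : BForm α} (h : AgreeOn f.FV ρ ρ') :
    f.eval ρ = f.eval ρ' := by
  induction f with
  | tru | fls => rfl
  | var a => exact h a rfl
  | band f g hf hg | bor f g hf hg =>
    simp only [eval, hf (h.mono Set.subset_union_left), hg (h.mono Set.subset_union_right)]
  | bnot f hf => simp only [eval, hf h]

end Formulas

namespace TGBA

variable {α : Type} {A : TGBA α}

theorem FV_subset_FVq {q q' : A.Q} {f : BForm α} {ac : Set A.F} (h : (q, f, ac, q') ∈ A.δ) :
    f.FV ⊆ A.FVq q :=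
  fun _ hp => ⟨_, h, .refl, hp⟩

theorem FVq_subset_FVq {q q' : A.Q} (h : A.Step q q') : A.FVq q' ⊆ A.FVq q :=
  fun _ ⟨t, ht, hreach, hp⟩ => ⟨t, ht, .head h hreach, hp⟩

/-- `A.ReachVia x ac y`: some nonempty finite path from `x` to `y` ends with a transition whose
acceptance set is `ac`. It turns finite pieces of a run into single steps; the acceptance sets of
the other transitions are forgotten, which is harmless when building accepting runs. -/
def ReachVia (A : TGBA α) (x : A.Q) (ac : Set A.F) (y : A.Q) : Prop :=
  ∃ z, A.Reach x z ∧ A.HasTransAc z ac y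

/-- The edges of `A` between states paired with the acceptance set of the transition through which
they were entered; this makes a run, with its acceptance sets, a path of a binary relation. -/
def AccStep (A : TGBA α) (x y : A.Q × Set A.F) : Prop :=
  A.HasTransAc x.1 y.2 y.1

theorem Reach.exists_reflTransGen_accStep {x z : A.Q} (h : A.Reach x z) (ac₀ : Set A.F) :
    ∃ ac, Relation.ReflTransGen A.AccStep (x, ac₀) (z, ac) := by
  induction h with
  | refl => exact ⟨ac₀, .refl⟩
  | tail _ hstep ih =>
    obtain ⟨ac, hpath⟩ := ih
    obtain ⟨f, ac', hf⟩ := hstep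
    exact ⟨ac', hpath.tail ⟨f, hf⟩⟩

theorem ReachVia.transGen_accStep {x y : A.Q} {ac : Set A.F} (h : A.ReachVia x ac y)
    (ac₀ : Set A.F) : Relation.TransGen A.AccStep (x, ac₀) (y, ac) := by
  obtain ⟨z, hreach, hz⟩ := h
  obtain ⟨ac₁, hpath⟩ := hreach.exists_reflTransGen_accStep ac₀
  exact .tail' hpath hz

theorem hasAccRun_of_accStep {y : ℕ → A.Q × Set A.F} (hinit : (y 0).1 = A.init)
    (hstep : ∀ n, A.AccStep (y n) (y (n + 1)))
    (hacc : ∀ c i, ∃ n, i ≤ n ∧ c ∈ (y (n + 1)).2) : A.HasAccRun := by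
  choose f hf using hstep
  exact ⟨fun n => ((y n).1, f n, (y (n + 1)).2, (y (n + 1)).1),
    ⟨hinit, fun n => ⟨hf n, rfl⟩⟩, hacc⟩

theorem hasAccRun_of_reachVia {x : ℕ → A.Q} {ac : ℕ → Set A.F} (hinit : x 0 = A.init)
    (hreach : ∀ i, A.ReachVia (x i) (ac i) (x (i + 1)))
    (hacc : ∀ c i, ∃ j, i ≤ j ∧ c ∈ ac j) : A.HasAccRun := by
  let node : ℕ → A.Q × Set A.F
    | 0 => (x 0, ∅)
    | i + 1 => (x (i + 1), ac i)
  have node_fst (i : ℕ) : (node i).1 = x i := by cases i <;> rfl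
  have hnode (i : ℕ) : Relation.TransGen A.AccStep (node i) (node (i + 1)) :=
    (node_fst i ▸ hreach i).transGen_accStep (node i).2
  obtain ⟨y, φ, hφ, hφ₀, hy, hyφ⟩ := exists_seq_of_forall_transGen hnode
  have hy₀ := hyφ 0
  rw [hφ₀] at hy₀
  refine hasAccRun_of_accStep (hy₀ ▸ hinit) hy fun c i => ?_
  obtain ⟨j, hij, hc⟩ := hacc c i
  have hj : j < φ (j + 1) := hφ.le_apply
  refine ⟨φ (j + 1) - 1, hij.trans (Nat.le_sub_one_of_lt hj), ?_⟩
  rwa [Nat.sub_add_cancel (Nat.one_le_of_lt hj), hyφ]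

end TGBA

namespace Kripke

variable {α : Type} {T : Kripke α} {a : Set T.S} {P : (α → Bool) → Prop}

theorem subset_reachF : a ⊆ T.ReachF a P :=
  Set.subset_sInter fun _ hb => hb.1

theorem succF_reachF_subset : T.SuccF (T.ReachF a P) P ⊆ T.ReachF a P :=
  fun _ ⟨s, hs, hΔ, hP⟩ _ hb => hb.2 ⟨s, hs _ hb, hΔ, hP⟩

theorem reachF_subset {b : Set T.S} (hab : a ⊆ b) (hb : T.SuccF b P ⊆ b) : T.ReachF a P ⊆ b :=
  Set.sInter_subset_of_mem ⟨hab, hb⟩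

/-- `T.InnerStep a`: the transition relation of `T` restricted to the set `a`, which describes the
paths and cycles (see `Kripke.HasCycle`) lying inside an aggregate. -/
def InnerStep (T : Kripke α) (a : Set T.S) (s s' : T.S) : Prop :=
  s ∈ a ∧ s' ∈ a ∧ (s, s') ∈ T.Δ

theorem exists_reflTransGen_of_mem_reachF {s : T.S} (hs : s ∈ T.ReachF a P) :
    ∃ e ∈ a, Relation.ReflTransGen (T.InnerStep (T.ReachF a P)) e s := by
  let b := {s ∈ T.ReachF a P | ∃ e ∈ a, Relation.ReflTransGen (T.InnerStep (T.ReachF a P)) e s}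
  have hab : a ⊆ b := fun e he => ⟨subset_reachF he, e, he, .refl⟩
  have hb : T.SuccF b P ⊆ b := by
    rintro s' ⟨s, ⟨hs, e, he, hpath⟩, hΔ, hP⟩
    have hs' : s' ∈ T.ReachF a P := succF_reachF_subset ⟨s, hs, hΔ, hP⟩
    exact ⟨hs', e, he, hpath.tail ⟨hs, hs', hΔ⟩⟩
  exact (reachF_subset hab hb hs).2

theorem nonempty_of_nonempty_reachF (h : (T.ReachF a P).Nonempty) : a.Nonempty :=
  let ⟨_, hs⟩ := h
  let ⟨e, he, _⟩ := exists_reflTransGen_of_mem_reachF hs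
  ⟨e, he⟩

theorem IsAgg.agreeOn_aggLab {E : Set α} (h : T.IsAgg E a) {s : T.S} (hs : s ∈ a) :
    AgreeOn E (T.aggLab a) (T.lab s) := by
  rw [aggLab, dif_pos h.1]
  exact h.2.1 _ h.1.some_mem _ hs

/-- The states lying on a cycle of `T` inside `a`: those of an aggregate `a` from which `A ⊗̃ T` can
diverge. -/
def cycleStates (T : Kripke α) (a : Set T.S) : Set T.S :=
  {s | Relation.TransGen (T.InnerStep a) s s}

theorem HasCycle.cycleStates_nonempty (h : T.HasCycle a) : (T.cycleStates a).Nonempty :=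
  let ⟨s, _, hcycle⟩ := h
  ⟨s, hcycle⟩

theorem exists_pred_mem_cycleStates {s : T.S} (hs : s ∈ T.cycleStates a) :
    ∃ s' ∈ T.cycleStates a, T.InnerStep a s' s := by
  obtain ⟨s', hpath, hstep⟩ := Relation.TransGen.tail'_iff.1 hs
  exact ⟨s', .head' hstep hpath, hstep⟩

end Kripke

section Products

variable {α : Type} {A : TGBA α} {T : Kripke α}

theorem stutProd_step {q : A.Q} {s s' : T.S} (hΔ : (s, s') ∈ T.Δ)
    (h : AgreeOn (A.FVq q) (T.lab s) (T.lab s')) : (stutProd A T).Step (q, s) (q, s') :=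
  ⟨_, _, .inr ⟨q, s, s', rfl, hΔ, h⟩⟩

theorem stutProd_hasTransAc {q q' : A.Q} {f : BForm α} {ac : Set A.F} {ρ : α → Bool} {s s' : T.S}
    (hf : (q, f, ac, q') ∈ A.δ) (heval : f.eval ρ = true) (hs : AgreeOn (A.FVq q) ρ (T.lab s))
    (hΔ : (s, s') ∈ T.Δ) : (stutProd A T).HasTransAc (q, s) ac (q', s') :=
  ⟨_, .inl ⟨q, q', s, s', ac, rfl, hΔ, f, hf,
    BForm.eval_eq_of_agreeOn (hs.mono (TGBA.FV_subset_FVq hf)) ▸ heval⟩⟩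

theorem stutProd_reach_of_isAgg {q : A.Q} {a : Set T.S} (ha : T.IsAgg (A.FVq q) a) {s t : T.S}
    (h : Relation.ReflTransGen (T.InnerStep a) s t) : (stutProd A T).Reach (q, s) (q, t) :=
  h.lift (fun s => (q, s)) fun _ _ ⟨hs, hs', hΔ⟩ => stutProd_step hΔ (ha.2.1 _ hs _ hs')

theorem exists_reachVia_of_isAgg {q q' : A.Q} {f : BForm α} {ac : Set A.F} {E : Set T.S}
    {P : (α → Bool) → Prop} (ha : T.IsAgg (A.FVq q) (T.ReachF E P))
    (hf : (q, f, ac, q') ∈ A.δ)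
    (heval : f.eval (restrS (A.FVq q) (T.aggLab (T.ReachF E P))) = true)
    {t s' : T.S} (ht : t ∈ T.ReachF E P) (hΔ : (t, s') ∈ T.Δ) :
    ∃ s ∈ E, (stutProd A T).ReachVia (q, s) ac (q', s') := by
  obtain ⟨s, hs, hpath⟩ := Kripke.exists_reflTransGen_of_mem_reachF ht
  have hlab : AgreeOn (A.FVq q) (restrS (A.FVq q) (T.aggLab (T.ReachF E P))) (T.lab t) :=
    (agreeOn_restrS _ _).trans (ha.agreeOn_aggLab ht)
  exact ⟨s, hs, (q, t), stutProd_reach_of_isAgg ha hpath, stutProd_hasTransAc hf heval hlab hΔ⟩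

/-- `IsEntrySet A T q E x`: the product `A ▷ T` being in state `(q, x)`, the set `E` is a possible
layer of concrete states for the corresponding run of `A ⊗̃ T`. An aggregate is generated by `E`;
for a divergent state, every state of `E` has a predecessor in `E`, as on a union of cycles, and
its label agrees with the remembered assignment. -/
inductive IsEntrySet (A : TGBA α) (T : Kripke α) (q : A.Q) (E : Set T.S) :
    Set T.S ⊕ (α → Bool) → Prop
  | aggregate (P : (α → Bool) → Prop) (hE : E.Nonempty) : IsEntrySet A T q E (.inl (T.ReachF E P))
  | divergent {l : α → Bool} (hE : E.Nonempty) (hpred : ∀ s ∈ E, ∃ s' ∈ E, (s', s) ∈ T.Δ)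
      (hlab : ∀ s ∈ E, AgreeOn (A.FVq q) l (T.lab s)) : IsEntrySet A T q E (.inr l)

theorem IsEntrySet.nonempty {q : A.Q} {E : Set T.S} {x : Set T.S ⊕ (α → Bool)}
    (h : IsEntrySet A T q E x) : E.Nonempty := by
  cases h <;> assumption

theorem exists_isEntrySet_of_mem_δ {t} (ht : t ∈ (SOP A T).δ) {E : Set T.S}
    (hE : IsEntrySet A T t.1.1 E t.1.2) :
    ∃ E', IsEntrySet A T t.2.2.2.1 E' t.2.2.2.2 ∧
      ∀ s' ∈ E', ∃ s ∈ E, (stutProd A T).ReachVia (t.1.1, s) t.2.2.1 (t.2.2.2.1, s') := by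
  rcases ht with
    ⟨q₁, q₂, a₁, a₂, ac, rfl, ha₁, ha₂, ⟨f, hf, heval⟩, l', rfl⟩ |
    ⟨q₁, q₂, a, l₂, ac, rfl, ha, hcycle, rfl, f, hf, heval⟩ |
    ⟨q₁, q₂, l₁, l₂, ac, rfl, -, rfl, f, hf, heval⟩
  · obtain ⟨P, -⟩ := hE
    refine ⟨_, .aggregate _ (Kripke.nonempty_of_nonempty_reachF ha₂.1), ?_⟩
    rintro s' ⟨⟨t, ht, hΔ, -⟩, -⟩
    exact exists_reachVia_of_isAgg ha₁ hf heval ht hΔ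
  · obtain ⟨P, -⟩ := hE
    refine ⟨T.cycleStates (T.ReachF E P), .divergent hcycle.cycleStates_nonempty ?_ ?_, ?_⟩
    · intro s hs
      obtain ⟨s', hs', hstep⟩ := Kripke.exists_pred_mem_cycleStates hs
      exact ⟨s', hs', hstep.2.2⟩
    · intro s hs
      obtain ⟨s', -, hstep⟩ := Kripke.exists_pred_mem_cycleStates hs
      exact (agreeOn_restrS _ _).trans
        ((ha.agreeOn_aggLab hstep.2.1).mono (TGBA.FVq_subset_FVq ⟨f, ac, hf⟩))
    · intro s' hs'
      obtain ⟨t, -, ht, -, hΔ⟩ := Kripke.exists_pred_mem_cycleStates hs'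
      exact exists_reachVia_of_isAgg ha hf heval ht hΔ
  · obtain - | ⟨hne, hpred, hlab⟩ := hE
    refine ⟨E, .divergent hne hpred fun s hs => ?_, fun s' hs' => ?_⟩
    · exact (agreeOn_restrS _ _).trans ((hlab s hs).mono (TGBA.FVq_subset_FVq ⟨f, ac, hf⟩))
    · obtain ⟨s, hs, hΔ⟩ := hpred s' hs'
      exact ⟨s, hs, (q₁, s), .refl, stutProd_hasTransAc hf heval (hlab s hs) hΔ⟩

end Products

theorem stmt5_general {α : Type} (A : TGBA α) (T : Kripke α) [Finite T.S] :
    (SOP A T).HasAccRun → (stutProd A T).HasAccRun := by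
  rintro ⟨π, ⟨hinit, hrun⟩, hacc⟩
  let Layer (i : ℕ) := {E : Set T.S // IsEntrySet A T (π i).1.1 E (π i).1.2}
  let E₀ : Layer 0 := ⟨{T.init}, hinit ▸ .aggregate _ (Set.singleton_nonempty _)⟩
  have exists_next (i : ℕ) (E : Layer i) : ∃ E' : Layer (i + 1), ∀ s' ∈ E'.1, ∃ s ∈ E.1,
      (stutProd A T).ReachVia ((π i).1.1, s) (π i).2.2.1 ((π (i + 1)).1.1, s') := by
    obtain ⟨E', hE', hpred⟩ := exists_isEntrySet_of_mem_δ (hrun i).1 E.2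
    rw [(hrun i).2] at hE' hpred
    exact ⟨⟨E', hE'⟩, hpred⟩
  obtain ⟨E, hE₀, hpred⟩ := exists_seq_of_forall_exists_succ E₀ exists_next
  have exists_pred (i : ℕ) (s' : (E (i + 1)).1) : ∃ s : (E i).1,
      (stutProd A T).ReachVia ((π i).1.1, s.1) (π i).2.2.1 ((π (i + 1)).1.1, s'.1) :=
    let ⟨s, hs, hreach⟩ := hpred i s' s'.2
    ⟨⟨s, hs⟩, hreach⟩
  have (i : ℕ) : Nonempty (E i).1 := (E i).2.nonempty.to_subtype
  obtain ⟨s, hs⟩ := exists_seq_of_forall_exists_pred (X := fun i => (E i).1) exists_pred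
  have hs₀ : (s 0).1 = T.init := (congrArg Subtype.val hE₀).subset (s 0).2
  have hq₀ : (π 0).1.1 = A.init := congrArg Prod.fst hinit
  exact TGBA.hasAccRun_of_reachVia (Prod.ext hq₀ hs₀) hs hacc

/-- If the Symbolic Observation Product `A ▷ T` has an accepting
run, then the stuttering synchronized product `A ⊗̃ T` has an accepting run. -/
theorem stmt5 {α : Type} (A : TGBA α) (T : Kripke α)
    [Finite A.Q] [Finite A.F] [Nonempty A.F] [Finite T.S]
    (hwf : A.WF) (hAP : A.AP = T.AP) (hst : A.StutterInvariant) :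
    (SOP A T).HasAccRun → (stutProd A T).HasAccRun :=
  stmt5_general A T
end

section
/- Let A be a TGBA over AP' and T a Kripke structure over AP ⊇ AP'. For every n and every finite path π_n = (q₀,s₀) →^{f₀,ac₀} (q₁,s₁) ⋯ →^{f_{n−1},ac_{n−1}} (q_n,s_n) of the synchronized product A⊗T starting in its initial state, there exist m ≤ n, a finite path σ_m = (q'₀,a₀) →^{ac_{φ(0)}} (q'₁,a₁) ⋯ →^{ac_{φ(m−1)}} (q'_m,a_m) of the Self-Loop Aggregation Product A⊠T starting in its initial state, and a strictly increasing function φ : {0,…,m−1} → {0,…,n−1}, such that q'_m = q_n, s_n ∈ a_m, and every index j < n with ac_j ≠ ∅ belongs to the image of φ (so no transition of π_n carrying a nonempty acceptance set is omitted). -/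
open scoped Classical

/-!
A transition `(q, s) → (q, s')` of `A ⊗ T` with an empty acceptance set comes from a self-loop of
`A` whose label belongs to `SF(q, ∅)`. Every aggregate paired with `q` in `A ⊠ T` is closed under
`FSucc(·, SF(q, ac))` for some `ac`, hence under `FSucc(·, SF(q, ∅))`, and so it already contains
`s'` once it contains `s`: such a transition can be skipped. Every other transition of `A ⊗ T` is
matched by a transition of `A ⊠ T`. Following `A ⊗ T` step by step thus gives a sequence of states
of `A ⊠ T` that stutters at the skipped indices, and its subsequence at the remaining indices is
the required path.
-/

section SkipStutter

variable {X : Type*} {p : ℕ → Prop} {x : ℕ → X}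

theorem eq_of_le_of_forall_succ_eq {j k : ℕ} (hjk : j ≤ k)
    (h : ∀ i, j ≤ i → i < k → x (i + 1) = x i) : x k = x j := by
  induction k, hjk using Nat.le_induction with
  | base => rfl
  | succ k hjk ih =>
    exact (h k hjk k.lt_succ_self).trans (ih fun i hji hik => h i hji (hik.trans k.lt_succ_self))

theorem apply_nth_zero_eq_apply_zero (hx : ∀ j, ¬p j → x (j + 1) = x j) :
    x (Nat.nth p 0) = x 0 := by
  refine eq_of_le_of_forall_succ_eq (Nat.zero_le _) fun i _ hi => hx i ?_
  rw [Nat.nth_zero] at hi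
  exact Nat.notMem_of_lt_sInf hi

theorem apply_nth_succ_eq_apply_nth_add_one (hp : (Set.ofPred p).Infinite)
    (hx : ∀ j, ¬p j → x (j + 1) = x j) (i : ℕ) : x (Nat.nth p (i + 1)) = x (Nat.nth p i + 1) := by
  have hlt : Nat.nth p i < Nat.nth p (i + 1) := Nat.nth_strictMono hp i.lt_succ_self
  exact eq_of_le_of_forall_succ_eq hlt fun j hij hj =>
    hx j fun hpj => (Nat.le_nth_of_lt_nth_succ hj hpj).not_gt hij

theorem exists_path_skipping_stutter {R : ℕ → X → X → Prop} {skip : ℕ → Prop} {n : ℕ}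
    (hskip : ∀ j < n, skip j → x (j + 1) = x j)
    (hstep : ∀ j < n, ¬skip j → R j (x j) (x (j + 1))) :
    ∃ m ≤ n, ∃ (φ : ℕ → ℕ) (y : ℕ → X), StrictMono φ ∧ (∀ i < m, φ i < n) ∧ y 0 = x 0 ∧
      (∀ i < m, R (φ i) (y i) (y (i + 1))) ∧ y m = x n ∧
      ∀ j < n, ¬skip j → ∃ i < m, φ i = j := by
  -- Keeping all indices from `n` on makes `Nat.nth kept` strictly increasing on the whole of `ℕ`
  -- and sends the number of indices kept before `n` to `n` itself.
  let kept : ℕ → Prop := fun j => n ≤ j ∨ ¬skip j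
  have hinf : (Set.ofPred kept).Infinite := (Set.Ici_infinite n).mono fun _ => Or.inl
  have hconst : ∀ j, ¬kept j → x (j + 1) = x j := fun j hj =>
    hskip j (not_le.1 (not_or.1 hj).1) (not_not.1 (not_or.1 hj).2)
  have hlast : Nat.nth kept (Nat.count kept n) = n := Nat.nth_count (Or.inl le_rfl)
  have hlt : ∀ i < Nat.count kept n, Nat.nth kept i < n := fun _ => Nat.nth_lt_of_lt_count
  refine ⟨Nat.count kept n, Nat.count_le kept, Nat.nth kept, x ∘ Nat.nth kept,
    Nat.nth_strictMono hinf, hlt, apply_nth_zero_eq_apply_zero hconst, fun i hi => ?_,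
    congrArg x hlast, fun j hj hnot => ?_⟩
  · have hnot : ¬skip (Nat.nth kept i) :=
      (Nat.nth_mem_of_infinite hinf i).resolve_left (hlt i hi).not_ge
    simpa only [Function.comp_apply, apply_nth_succ_eq_apply_nth_add_one hinf hconst]
      using hstep _ (hlt i hi) hnot
  · have hkept : kept j := Or.inr hnot
    exact ⟨Nat.count kept j, Nat.count_strict_mono hkept hj, Nat.nth_count hkept⟩

end SkipStutter

namespace Kripke

variable {α : Type} (T : Kripke α) (a : Set T.S) {P P' : (α → Bool) → Prop}

theorem subset_FReach : a ⊆ T.FReach a P :=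
  Set.subset_sInter fun _ hb => hb.1

theorem FSucc_FReach_subset : T.FSucc (T.FReach a P) P ⊆ T.FReach a P := by
  rintro s' ⟨s, hs, hΔ, hP⟩ b hb
  exact hb.2 ⟨s, hs b hb, hΔ, hP⟩

theorem FSucc_subset_FSucc_of_imp (h : ∀ ρ, P ρ → P' ρ) : T.FSucc a P ⊆ T.FSucc a P' :=
  fun _ ⟨s, hs, hΔ, hP⟩ => ⟨s, hs, hΔ, h _ hP⟩

end Kripke

section Products

variable {α : Type} {A : TGBA α} {T : Kripke α} {q₁ q₂ : A.Q} {ac : Set A.F}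

theorem SFpred_mono {ac' : Set A.F} (h : ac ⊆ ac') (ρ : α → Bool) :
    SFpred A q₁ ac ρ → SFpred A q₁ ac' ρ :=
  fun ⟨f, ac₀, hδ, hsub, hρ⟩ => ⟨f, ac₀, hδ, hsub.trans h, hρ⟩

theorem FSucc_FReach_SFpred_empty_subset (a : Set T.S) :
    T.FSucc (T.FReach a (SFpred A q₁ ac)) (SFpred A q₁ ∅) ⊆ T.FReach a (SFpred A q₁ ac) :=
  (T.FSucc_subset_FSucc_of_imp _ (SFpred_mono (Set.empty_subset ac))).trans
    (T.FSucc_FReach_subset a)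

theorem synchProd_hasTransAc_iff {s₁ s₂ : T.S} :
    (synchProd A T).HasTransAc (q₁, s₁) ac (q₂, s₂) ↔
      ∃ g : BForm α, (s₁, s₂) ∈ T.Δ ∧ (q₁, g, ac, q₂) ∈ A.δ ∧ g.eval (T.lab s₁) = true := by
  constructor
  · rintro ⟨_, _, _, _, _, _, ⟨⟩, hΔ, g, hδ, hg⟩
    exact ⟨g, hΔ, hδ, hg⟩
  · rintro ⟨g, hΔ, hδ, hg⟩
    exact ⟨_, _, _, _, _, _, rfl, hΔ, g, hδ, hg⟩

theorem SLAP_hasTransAc_FReach {a : Set T.S} {f : BForm α} (hδ : (q₁, f, ac, q₂) ∈ A.δ)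
    (hac : q₁ = q₂ → ac ≠ ∅) (hne : (T.FSucc a fun ρ => f.eval ρ = true).Nonempty) :
    (SLAP A T).HasTransAc (q₁, a) ac
      (q₂, T.FReach (T.FSucc a fun ρ => f.eval ρ = true) (SFpred A q₂ ac)) := by
  have ha : a.Nonempty := let ⟨_, s, hs, _⟩ := hne; ⟨s, hs⟩
  exact ⟨_, _, _, _, _, _, rfl, ha, hne.mono (T.subset_FReach _), f, hδ, hac, rfl⟩

end Products

section Aggregates

variable {α : Type} {A : TGBA α} (T : Kripke α) (q : ℕ → A.Q) (g : ℕ → BForm α)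
  (ac : ℕ → Set A.F)

/-- The transition at index `j` of a path with automaton states `q` and acceptance sets `ac` is
skippable, i.e. it needs no counterpart in `A ⊠ T`: it stays in `q j` and has an empty acceptance
set. -/
def Skippable (j : ℕ) : Prop := q j = q (j + 1) ∧ ac j = ∅

/-- The aggregate reached in `A ⊠ T` after mimicking the first `j` transitions of a path of `A ⊗ T`
with automaton states `q`, automaton labels `g` and acceptance sets `ac`; it is left unchanged by
skippable transitions. -/
noncomputable def aggregates : ℕ → Set T.S
  | 0 => T.FReach {T.init} (SFpred A (q 0) ∅)
  | j + 1 =>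
    if Skippable q ac j then aggregates j
    else T.FReach (T.FSucc (aggregates j) fun ρ => (g j).eval ρ = true)
      (SFpred A (q (j + 1)) (ac j))

variable {q ac} {j : ℕ}

theorem aggregates_succ_of_skippable (h : Skippable q ac j) :
    aggregates T q g ac (j + 1) = aggregates T q g ac j :=
  if_pos h

theorem aggregates_succ_of_not_skippable (h : ¬Skippable q ac j) :
    aggregates T q g ac (j + 1) =
      T.FReach (T.FSucc (aggregates T q g ac j) fun ρ => (g j).eval ρ = true)
        (SFpred A (q (j + 1)) (ac j)) :=
  if_neg h

theorem FSucc_aggregates_subset :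
    T.FSucc (aggregates T q g ac j) (SFpred A (q j) ∅) ⊆ aggregates T q g ac j := by
  induction j with
  | zero => exact FSucc_FReach_SFpred_empty_subset _
  | succ j ih =>
    by_cases h : Skippable q ac j
    · rwa [aggregates_succ_of_skippable T g h, ← h.1]
    · rw [aggregates_succ_of_not_skippable T g h]
      exact FSucc_FReach_SFpred_empty_subset _

variable {T g} {s : ℕ → T.S}

theorem mem_aggregates (hs0 : s 0 = T.init)
    (hstep : ∀ i < j, (s i, s (i + 1)) ∈ T.Δ ∧ (q i, g i, ac i, q (i + 1)) ∈ A.δ ∧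
      (g i).eval (T.lab (s i)) = true) :
    s j ∈ aggregates T q g ac j := by
  induction j with
  | zero => exact T.subset_FReach _ hs0
  | succ j ih =>
    have hmem : s j ∈ aggregates T q g ac j := ih fun i hi => hstep i (hi.trans j.lt_succ_self)
    obtain ⟨hΔ, hδ, hg⟩ := hstep j j.lt_succ_self
    by_cases h : Skippable q ac j
    · rw [← h.1, h.2] at hδ
      rw [aggregates_succ_of_skippable T g h]
      exact FSucc_aggregates_subset T g ⟨s j, hmem, hΔ, g j, ∅, hδ, subset_rfl, hg⟩
    · rw [aggregates_succ_of_not_skippable T g h]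
      exact T.subset_FReach _ ⟨s j, hmem, hΔ, hg⟩

theorem SLAP_hasTransAc_aggregates (h : ¬Skippable q ac j)
    (hmem : s j ∈ aggregates T q g ac j) (hΔ : (s j, s (j + 1)) ∈ T.Δ)
    (hδ : (q j, g j, ac j, q (j + 1)) ∈ A.δ) (hg : (g j).eval (T.lab (s j)) = true) :
    (SLAP A T).HasTransAc (q j, aggregates T q g ac j) (ac j)
      (q (j + 1), aggregates T q g ac (j + 1)) := by
  rw [aggregates_succ_of_not_skippable T g h]
  exact SLAP_hasTransAc_FReach hδ (fun hq hac => h ⟨hq, hac⟩) ⟨s (j + 1), s j, hmem, hΔ, hg⟩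

end Aggregates

theorem stmt12_general {α : Type} (A : TGBA α) (T : Kripke α)
    (n : ℕ) (q : ℕ → A.Q) (s : ℕ → T.S) (ac : ℕ → Set A.F)
    (hq0 : q 0 = A.init) (hs0 : s 0 = T.init)
    (hpath : ∀ i < n,
      (synchProd A T).HasTransAc (q i, s i) (ac i) (q (i + 1), s (i + 1))) :
    ∃ m ≤ n, ∃ (φ : ℕ → ℕ) (q' : ℕ → A.Q) (a : ℕ → Set T.S),
      (∀ i j, i < j → j < m → φ i < φ j) ∧ (∀ i < m, φ i < n) ∧
      ((q' 0, a 0) : (SLAP A T).Q) = (SLAP A T).init ∧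
      (∀ i < m,
        (SLAP A T).HasTransAc (q' i, a i) (ac (φ i)) (q' (i + 1), a (i + 1))) ∧
      q' m = q n ∧ s n ∈ a m ∧
      ∀ j < n, ac j ≠ ∅ → ∃ i < m, φ i = j := by
  simp only [synchProd_hasTransAc_iff] at hpath
  have : Nonempty (BForm α) := ⟨.tru⟩
  choose! g hstep using hpath
  let x : ℕ → A.Q × Set T.S := fun j => (q j, aggregates T q g ac j)
  have hmem : ∀ j ≤ n, s j ∈ aggregates T q g ac j := fun j hj =>
    mem_aggregates hs0 fun i hi => hstep i (hi.trans_le hj)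
  have hskip : ∀ j < n, Skippable q ac j → x (j + 1) = x j := fun j _ h =>
    Prod.ext h.1.symm (aggregates_succ_of_skippable T g h)
  have htrans : ∀ j < n, ¬Skippable q ac j → (SLAP A T).HasTransAc (x j) (ac j) (x (j + 1)) :=
    fun j hj h =>
      have ⟨hΔ, hδ, hg⟩ := hstep j hj
      SLAP_hasTransAc_aggregates h (hmem j hj.le) hΔ hδ hg
  obtain ⟨m, hm, φ, y, hφ, hφn, hy0, hy, hym, hkept⟩ := exists_path_skipping_stutter
    (R := fun j u v => (SLAP A T).HasTransAc u (ac j) v) hskip htrans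
  have hinit : x 0 = (SLAP A T).init := by simp only [x, aggregates, hq0, SLAP]
  have hlast : s n ∈ (y m).2 := hym ▸ hmem n le_rfl
  exact ⟨m, hm, φ, fun i => (y i).1, fun i => (y i).2, fun _ _ hij _ => hφ hij, hφn,
    hy0.trans hinit, hy, congrArg Prod.fst hym, hlast, fun j hj hac => hkept j hj fun h => hac h.2⟩

/-- Every finite path of the synchronized product `A ⊗ T`
starting at its initial state projects to a finite path of the Self-Loop
Aggregation Product `A ⊠ T` starting at its initial state, via a strictly
increasing function `φ` whose image contains every index carrying a nonempty
acceptance set. -/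
theorem stmt12 {α : Type} (A : TGBA α) (T : Kripke α)
    [Finite A.Q] [Finite A.F] [Nonempty A.F] [Finite T.S]
    (hwf : A.WF) (hAP : A.AP ⊆ T.AP)
    (n : ℕ) (q : ℕ → A.Q) (s : ℕ → T.S) (ac : ℕ → Set A.F)
    (hq0 : q 0 = A.init) (hs0 : s 0 = T.init)
    (hpath : ∀ i < n,
      (synchProd A T).HasTransAc (q i, s i) (ac i) (q (i + 1), s (i + 1))) :
    ∃ m ≤ n, ∃ (φ : ℕ → ℕ) (q' : ℕ → A.Q) (a : ℕ → Set T.S),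
      (∀ i j, i < j → j < m → φ i < φ j) ∧ (∀ i < m, φ i < n) ∧
      ((q' 0, a 0) : (SLAP A T).Q) = (SLAP A T).init ∧
      (∀ i < m,
        (SLAP A T).HasTransAc (q' i, a i) (ac (φ i)) (q' (i + 1), a (i + 1))) ∧
      q' m = q n ∧ s n ∈ a m ∧
      ∀ j < n, ac j ≠ ∅ → ∃ i < m, φ i = j := by
  exact stmt12_general A T n q s ac hq0 hs0 hpath
end
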